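/- arXiv:1804.05207 — 6 statements merged into one kernel-verified Lean document; each statement's English description precedes it below -/
import Mathlib

section
/- Let c > 0 be a real number and let n be an integer with n > ec/2 + 1. Then the series ∑_{k=n}^{∞} (ec/(2k+1))^k converges and ∑_{k=n}^{∞} (ec/(2k+1))^k ≤ 1 / ( log((2n-1)/(ec)) · ((2n-1)/(ec))^{n-1} ). -/
/-! With `r = (2n - 1) / (ec)`, the hypothesis on `n` gives `r > 1`, and every base
`ec / (2k + 1)` with `k ≥ n` is at most `r⁻¹`. Comparison with the geometric series of ratio `r⁻¹`
gives convergence and the bound `r⁻ⁿ / (1 - r⁻¹) = 1 / ((r - 1) r ^ (n - 1))`; the claim then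
follows from `log r ≤ r - 1`. -/


open MeasureTheory

/-- The weight function `ω_α(x) = (1 - x²)^α`. -/
noncomputable def w (α x : ℝ) : ℝ := (1 - x ^ 2) ^ α

/-- The weighted finite Laplace transform `(L_c^α f)(x) = ∫_{-1}^1 e^{cxy} f(y) ω_α(y) dy`. -/
noncomputable def Lap (c α : ℝ) (f : ℝ → ℝ) (x : ℝ) : ℝ :=
  ∫ y in (-1:ℝ)..1, Real.exp (c * x * y) * f y * w α y

/-- Membership in `L²(I, ω_α)`. -/
def MemL2 (α : ℝ) (f : ℝ → ℝ) : Prop :=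
  Measurable f ∧ IntervalIntegrable (fun x => f x ^ 2 * w α x) volume (-1) 1

/-- the tail sum `∑_{k ≥ n} (ec/(2k+1))^k` converges and is bounded. -/
theorem stmt3 (c : ℝ) (hc : 0 < c) (n : ℕ)
    (hn : Real.exp 1 * c / 2 + 1 < (n : ℝ)) :
    Summable (fun k : ℕ => (Real.exp 1 * c / (2 * ((k : ℝ) + (n : ℝ)) + 1)) ^ (k + n)) ∧
    ∑' k : ℕ, (Real.exp 1 * c / (2 * ((k : ℝ) + (n : ℝ)) + 1)) ^ (k + n) ≤
      1 / (Real.log ((2 * (n : ℝ) - 1) / (Real.exp 1 * c)) *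
        ((2 * (n : ℝ) - 1) / (Real.exp 1 * c)) ^ ((n : ℝ) - 1)) := by
  have ha : 0 < Real.exp 1 * c := by positivity
  set a := Real.exp 1 * c with ha_def
  set r := (2 * (n : ℝ) - 1) / a with hr_def
  have hr : 1 < r := by
    rw [hr_def, lt_div_iff₀ ha]; linarith
  have hr0 : 0 < r := by linarith
  have hinv : r⁻¹ < 1 := inv_lt_one_of_one_lt₀ hr
  have hterm0 : ∀ k : ℕ, 0 ≤ (a / (2 * ((k : ℝ) + (n : ℝ)) + 1)) ^ (k + n) := fun k => by
    positivity
  have hterm : ∀ k : ℕ, (a / (2 * ((k : ℝ) + (n : ℝ)) + 1)) ^ (k + n) ≤ r⁻¹ ^ n * r⁻¹ ^ k := by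
    intro k
    rw [← pow_add, add_comm n k]
    refine pow_le_pow_left₀ (by positivity) ?_ _
    rw [hr_def, inv_div]
    have hk : (0 : ℝ) ≤ k := k.cast_nonneg
    exact div_le_div_of_nonneg_left ha.le (by linarith) (by linarith)
  have hgeom : HasSum (fun k : ℕ => r⁻¹ ^ n * r⁻¹ ^ k) (r⁻¹ ^ n * (1 - r⁻¹)⁻¹) :=
    (hasSum_geometric_of_lt_one (by positivity) hinv).mul_left _
  have hsum := Summable.of_nonneg_of_le hterm0 hterm hgeom.summable
  refine ⟨hsum, (hsum.tsum_le_tsum hterm hgeom.summable).trans ?_⟩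
  rw [hgeom.tsum_eq, Real.rpow_sub hr0, Real.rpow_natCast, Real.rpow_one]
  have hlog : 0 < Real.log r := Real.log_pos hr
  have hr1 : 0 < r - 1 := by linarith
  have hval : r⁻¹ ^ n * (1 - r⁻¹)⁻¹ = 1 / ((r - 1) * (r ^ n / r)) := by
    have h1 : 1 - r⁻¹ = (r - 1) / r := by field_simp
    rw [h1, inv_pow, inv_div (r - 1) r]
    field_simp
  rw [hval]
  have hle := Real.log_le_sub_one_of_pos hr0
  gcongr
end

section
/- Let α > -1/2, c > 0 and 0 < γ < 1 be real numbers. If ν ∈ ℝ satisfies ∫_{-1}^{1} ∫_{-1}^{1} e^{cxy} f(x) f(y) ω_α(x) ω_α(y) dx dy ≤ ν ∫_{-1}^{1} f(x)² ω_α(x) dx for every f ∈ L²(I,ω_α), then ν ≥ K_{α,γ} e^{γ² c}, where K_{α,γ} = √(2/π) (1-γ)² (1-γ²)^{α-1/2} / (α+1). -/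
/-!
Test the inequality on the indicator `f` of `{δ ≤ |x|}`, for a suitable `0 < δ < 1`. Since `f` and
the weight are even, the quadratic form only sees `e^{cxy} + e^{-cxy} = 2 cosh (cxy)` with
`x, y ∈ [δ, 1]`, which is at least `2 cosh (cδ²)`. As `f² = f`, dividing by `‖f‖²` gives
(`ge_of_form_le`)

  `ν ≥ 2 cosh (cδ²) ∫_δ^1 (1 - x²)^α dx`.

Factoring `1 - x² = (1 - x)(1 + x)` and bounding `(1 + x)^α` below by a constant `k` shows that the
integral is at least `k (1 - δ)^{α+1} / (α + 1)` (`le_integral_w`). It remains to choose `δ`: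

* if `α ≥ 0`, take `δ = γ`, `k = (1 + γ)^α`;
* if `α < 0` and `γ ≥ 1/10`, take `δ = γ`, `k = 2^α`;
* if `α < 0` and `γ < 1/10`, the choice `δ = γ` can fail for large `c` (for `α` near `-1/2`
  and `γ` near `0` the integral `∫_γ^1 ω_α` is smaller than `K_{α,γ}`), so take `δ = 1/5`, `k = 2^α`;
  the factor `2 cosh (c/25) ≥ (3/2) e^{c/100} ≥ (3/2) e^{γ²c}` makes up for the loss.
-/

open MeasureTheory

/-! ### The weight and its integral over `[δ, 1]` -/

lemma w_eq_mul {α x : ℝ} (h0 : -1 ≤ x) (h1 : x ≤ 1) :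
    w α x = (1 - x) ^ α * (1 + x) ^ α := by
  rw [w, ← Real.mul_rpow (by linarith) (by linarith)]
  ring_nf

lemma w_nonneg {α x : ℝ} (h0 : -1 ≤ x) (h1 : x ≤ 1) : 0 ≤ w α x :=
  Real.rpow_nonneg (by nlinarith) _

lemma w_neg (α x : ℝ) : w α (-x) = w α x := by simp [w]

lemma measurable_w (α : ℝ) : Measurable (w α) := by unfold w; fun_prop

lemma intervalIntegrable_one_sub_rpow {α : ℝ} (hα : -(1/2) < α) (a : ℝ) :
    IntervalIntegrable (fun x : ℝ => (1 - x) ^ α) volume a 1 := by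
  have h := (intervalIntegral.intervalIntegrable_rpow' (a := 1 - a) (b := 0)
    (r := α) (by linarith)).comp_sub_left 1
  simpa using h

lemma intervalIntegrable_w {α : ℝ} (hα : -(1/2) < α) :
    IntervalIntegrable (w α) volume (-1) 1 := by
  have h1 : IntervalIntegrable (w α) volume 0 1 := by
    have h : IntervalIntegrable (fun x : ℝ => (1 - x) ^ α * (1 + x) ^ α) volume 0 1 := by
      refine (intervalIntegrable_one_sub_rpow hα 0).mul_continuousOn ?_
      intro x hx
      rw [Set.uIcc_of_le zero_le_one] at hx
      refine ContinuousAt.continuousWithinAt ?_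
      refine ContinuousAt.rpow_const (by fun_prop) (Or.inl ?_)
      linarith [hx.1]
    refine h.congr ?_
    intro x hx
    rw [Set.uIoc_of_le zero_le_one] at hx
    exact (w_eq_mul (by linarith [hx.1]) hx.2).symm
  have h2 : IntervalIntegrable (w α) volume (-1) 0 := by
    have := (h1.comp_sub_left 0).symm
    simpa [w_neg] using this
  exact h2.trans h1

lemma le_integral_w {α δ k : ℝ} (hα : -(1/2) < α) (hδ0 : 0 < δ) (hδ1 : δ < 1)
    (hk : ∀ x, δ ≤ x → x ≤ 1 → k ≤ (1 + x) ^ α) :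
    k * ((1 - δ) ^ (α + 1) / (α + 1)) ≤ ∫ x in δ..1, w α x := by
  have hI : ∫ x in δ..1, (1 - x) ^ α = (1 - δ) ^ (α + 1) / (α + 1) := by
    rw [intervalIntegral.integral_comp_sub_left (fun x : ℝ => x ^ α) 1,
      integral_rpow (Or.inl (by linarith)), sub_self, Real.zero_rpow (by linarith), sub_zero]
  rw [← hI, ← intervalIntegral.integral_const_mul]
  refine intervalIntegral.integral_mono_on hδ1.le
    ((intervalIntegrable_one_sub_rpow hα δ).const_mul k) ?_ ?_
  · refine (intervalIntegrable_w hα).mono_set ?_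
    rw [Set.uIcc_of_le hδ1.le, Set.uIcc_of_le (by norm_num)]
    exact Set.Icc_subset_Icc_left (by linarith)
  · intro x hx
    rw [w_eq_mul (by linarith [hx.1]) hx.2, mul_comm]
    exact mul_le_mul_of_nonneg_left (hk x hx.1 hx.2) (Real.rpow_nonneg (by linarith [hx.2]) _)

/-! ### The even test function -/

/-- The indicator function of `{x | δ ≤ |x|}`. -/
noncomputable def outer (δ x : ℝ) : ℝ := if δ ≤ |x| then 1 else 0

lemma outer_nonneg (δ x : ℝ) : 0 ≤ outer δ x := by unfold outer; split_ifs <;> norm_num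

lemma outer_le_one (δ x : ℝ) : outer δ x ≤ 1 := by unfold outer; split_ifs <;> norm_num

lemma outer_sq (δ x : ℝ) : outer δ x ^ 2 = outer δ x := by unfold outer; split_ifs <;> norm_num

lemma outer_neg (δ x : ℝ) : outer δ (-x) = outer δ x := by simp [outer]

lemma measurable_outer (δ : ℝ) : Measurable (outer δ) := by
  unfold outer
  exact Measurable.ite (measurableSet_le measurable_const (by fun_prop)) measurable_const
    measurable_const

/-- A bounded measurable factor preserves integrability of `outer δ * w α`. -/
lemma intervalIntegrable_mul_outer_w {α : ℝ} (hα : -(1/2) < α) (δ : ℝ) {g : ℝ → ℝ} {C : ℝ}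
    (hg : Measurable g) (hC : ∀ x ∈ Set.Ioc (-1:ℝ) 1, |g x| ≤ C) :
    IntervalIntegrable (fun x => g x * (outer δ x * w α x)) volume (-1) 1 := by
  have hw := intervalIntegrable_w hα
  rw [intervalIntegrable_iff_integrableOn_Ioc_of_le (by norm_num)] at hw ⊢
  refine (hw.const_mul C).mono'
    (hg.mul ((measurable_outer δ).mul (measurable_w α))).aestronglyMeasurable ?_
  refine (ae_restrict_iff' measurableSet_Ioc).mpr (Filter.Eventually.of_forall fun x hx => ?_)
  have h0 := w_nonneg (α := α) hx.1.le hx.2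
  have h1 : outer δ x * w α x ≤ w α x := mul_le_of_le_one_left h0 (outer_le_one δ x)
  have h2 : 0 ≤ outer δ x * w α x := mul_nonneg (outer_nonneg δ x) h0
  rw [Real.norm_eq_abs, abs_mul, abs_of_nonneg h2]
  exact mul_le_mul (hC x hx) h1 h2 ((abs_nonneg _).trans (hC x hx))

lemma exp_add_exp_neg_mono {s t : ℝ} (hs : 0 ≤ s) (hst : s ≤ |t|) :
    Real.exp s + Real.exp (-s) ≤ Real.exp t + Real.exp (-t) := by
  have h : Real.cosh s ≤ Real.cosh t := Real.cosh_le_cosh.mpr (by rwa [abs_of_nonneg hs])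
  rw [Real.cosh_eq, Real.cosh_eq] at h
  linarith

lemma exp_le_exp_of_mem {c x y : ℝ} (hc : 0 < c) (hx : x ∈ Set.Ioc (-1:ℝ) 1)
    (hy : y ∈ Set.Ioc (-1:ℝ) 1) : Real.exp (c * x * y) ≤ Real.exp c := by
  refine Real.exp_le_exp.mpr ?_
  have h : x * y ≤ 1 := by nlinarith [hx.1, hx.2, hy.1, hy.2]
  nlinarith

lemma intervalIntegrable_kernel {c α x : ℝ} (hc : 0 < c) (hα : -(1/2) < α) (δ : ℝ)
    (hx : x ∈ Set.Ioc (-1:ℝ) 1) :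
    IntervalIntegrable (fun y => Real.exp (c * x * y) * (outer δ y * w α y)) volume (-1) 1 := by
  refine intervalIntegrable_mul_outer_w hα δ (C := Real.exp c) (by fun_prop) fun y hy => ?_
  rw [abs_of_pos (Real.exp_pos _)]
  exact exp_le_exp_of_mem hc hx hy

/-! ### The quadratic form of the test function -/

/-- Folding the integral over `[-1, 1]` onto `[0, 1]` turns `e^{cxy}` into `2 cosh (cxy)`, which is
at least `2 cosh (cδ²)` when `|x|, |y| ≥ δ`. -/
lemma inner_ge {c α δ x : ℝ} (hc : 0 < c) (hα : -(1/2) < α) (hδ0 : 0 < δ) (hδ1 : δ < 1)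
    (hx : x ∈ Set.Ioc (-1:ℝ) 1) (hδx : δ ≤ |x|) :
    (Real.exp (c * δ ^ 2) + Real.exp (-(c * δ ^ 2))) * ∫ y in δ..1, w α y ≤
      ∫ y in (-1:ℝ)..1, Real.exp (c * x * y) * (outer δ y * w α y) := by
  set F : ℝ → ℝ := fun y => Real.exp (c * x * y) * (outer δ y * w α y) with hF
  have hFi : IntervalIntegrable F volume (-1) 1 := intervalIntegrable_kernel hc hα δ hx
  have hFi' : IntervalIntegrable (fun y => F (-y)) volume (-1) 1 := by
    simpa using (hFi.comp_sub_left 0).symm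
  have sub : ∀ a b : ℝ, -1 ≤ a → a ≤ b → b ≤ 1 → Set.uIcc a b ⊆ Set.uIcc (-1:ℝ) 1 := by
    intro a b h1 h2 h3
    rw [Set.uIcc_of_le h2, Set.uIcc_of_le (by norm_num)]
    exact Set.Icc_subset_Icc h1 h3
  have hneg : ∫ y in (-1:ℝ)..0, F y = ∫ y in (0:ℝ)..1, F (-y) := by simp
  have hfold : ∫ y in (-1:ℝ)..1, F y = ∫ y in (0:ℝ)..1, (F y + F (-y)) := by
    rw [intervalIntegral.integral_add
      (hFi.mono_set (sub _ _ (by norm_num) (by norm_num) (by norm_num)))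
      (hFi'.mono_set (sub _ _ (by norm_num) (by norm_num) (by norm_num))), ← hneg, add_comm]
    exact (intervalIntegral.integral_add_adjacent_intervals
      (hFi.mono_set (sub _ _ (by norm_num) (by norm_num) (by norm_num)))
      (hFi.mono_set (sub _ _ (by norm_num) (by norm_num) (by norm_num)))).symm
  have hG := hFi.add hFi'
  have hnn : ∀ y, -1 ≤ y → y ≤ 1 → 0 ≤ F y := fun y h0 h1 =>
    mul_nonneg (Real.exp_pos _).le (mul_nonneg (outer_nonneg _ _) (w_nonneg h0 h1))
  have hsplit : ∫ y in δ..1, (F y + F (-y)) ≤ ∫ y in (0:ℝ)..1, (F y + F (-y)) := by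
    rw [← intervalIntegral.integral_add_adjacent_intervals (a := 0) (b := δ) (c := 1)
      (hG.mono_set (sub _ _ (by norm_num) hδ0.le hδ1.le))
      (hG.mono_set (sub _ _ (by linarith) hδ1.le le_rfl))]
    refine le_add_of_nonneg_left (intervalIntegral.integral_nonneg hδ0.le fun y hy => ?_)
    exact add_nonneg (hnn y (by linarith [hy.1]) (by linarith [hy.2]))
      (hnn _ (by linarith [hy.2]) (by linarith [hy.1]))
  rw [hfold]
  refine le_trans ?_ hsplit
  rw [← intervalIntegral.integral_const_mul]
  refine intervalIntegral.integral_mono_on hδ1.le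
    (((intervalIntegrable_w hα).mono_set (sub _ _ (by linarith) hδ1.le le_rfl)).const_mul _)
    (hG.mono_set (sub _ _ (by linarith) hδ1.le le_rfl)) fun y hy => ?_
  have hy0 : 0 ≤ y := hδ0.le.trans hy.1
  have ho : outer δ y = 1 := by
    rw [outer, if_pos]
    rw [abs_of_nonneg hy0]
    exact hy.1
  simp only [hF, outer_neg, w_neg, ho, one_mul, mul_neg]
  rw [← add_mul]
  refine mul_le_mul_of_nonneg_right (exp_add_exp_neg_mono (by positivity) ?_)
    (w_nonneg (by linarith) hy.2)
  rw [abs_mul, abs_mul, abs_of_pos hc, abs_of_nonneg hy0, mul_assoc, sq]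
  exact mul_le_mul_of_nonneg_left (mul_le_mul hδx hy.1 hδ0.le (abs_nonneg _)) hc.le

lemma integral_w_pos {α δ : ℝ} (hα : -(1/2) < α) (hδ0 : 0 < δ) (hδ1 : δ < 1) :
    0 < ∫ x in δ..1, w α x := by
  refine intervalIntegral.intervalIntegral_pos_of_pos_on ?_ (fun x hx => ?_) hδ1
  · refine (intervalIntegrable_w hα).mono_set ?_
    rw [Set.uIcc_of_le hδ1.le, Set.uIcc_of_le (by norm_num)]
    exact Set.Icc_subset_Icc_left (by linarith)
  · exact Real.rpow_pos_of_pos (by nlinarith [hx.1, hx.2]) _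

lemma integral_outer_w_pos {α δ : ℝ} (hα : -(1/2) < α) (hδ0 : 0 < δ) (hδ1 : δ < 1) :
    0 < ∫ x in (-1:ℝ)..1, outer δ x * w α x := by
  have hi : IntervalIntegrable (fun x => outer δ x * w α x) volume (-1) 1 := by
    simpa using intervalIntegrable_mul_outer_w hα δ (g := fun _ => 1) (C := 1)
      measurable_const (by simp)
  have h1 : ∫ x in δ..1, outer δ x * w α x = ∫ x in δ..1, w α x := by
    refine intervalIntegral.integral_congr fun x hx => ?_
    rw [Set.uIcc_of_le hδ1.le] at hx
    have : δ ≤ |x| := hx.1.trans (le_abs_self x)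
    simp [outer, this]
  refine (integral_w_pos hα hδ0 hδ1).trans_le (h1 ▸ ?_)
  refine intervalIntegral.integral_mono_interval (by linarith) hδ1.le le_rfl ?_ hi
  refine (ae_restrict_iff' measurableSet_Ioc).mpr (Filter.Eventually.of_forall fun x hx => ?_)
  exact mul_nonneg (outer_nonneg δ x) (w_nonneg hx.1.le hx.2)

/-- The lower bound obtained from the test function `outer δ`. -/
lemma ge_of_form_le {c α ν δ : ℝ} (hc : 0 < c) (hα : -(1/2) < α) (hδ0 : 0 < δ) (hδ1 : δ < 1)
    (h : ∀ f : ℝ → ℝ, MemL2 α f →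
      (∫ x in (-1:ℝ)..1, ∫ y in (-1:ℝ)..1,
          Real.exp (c * x * y) * f x * f y * w α x * w α y) ≤
        ν * ∫ x in (-1:ℝ)..1, f x ^ 2 * w α x) :
    (Real.exp (c * δ ^ 2) + Real.exp (-(c * δ ^ 2))) * ∫ y in δ..1, w α y ≤ ν := by
  have hi : IntervalIntegrable (fun x => outer δ x * w α x) volume (-1) 1 := by
    simpa using intervalIntegrable_mul_outer_w hα δ (g := fun _ => 1) (C := 1)
      measurable_const (by simp)
  have hmem : MemL2 α (outer δ) := ⟨measurable_outer δ, by simpa only [outer_sq] using hi⟩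
  have key := h _ hmem
  simp only [outer_sq] at key
  set M := (Real.exp (c * δ ^ 2) + Real.exp (-(c * δ ^ 2))) * ∫ y in δ..1, w α y with hM
  set g : ℝ → ℝ := fun x =>
    ∫ y in (-1:ℝ)..1, Real.exp (c * x * y) * (outer δ y * w α y) with hg
  have hrw : ∀ x, (∫ y in (-1:ℝ)..1,
      Real.exp (c * x * y) * outer δ x * outer δ y * w α x * w α y) =
      g x * (outer δ x * w α x) := by
    intro x
    rw [hg, ← intervalIntegral.integral_mul_const]
    congr 1
    ext y
    ring
  simp only [hrw] at key
  have hgm : Measurable g := by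
    simp only [hg, intervalIntegral.integral_of_le (show (-1:ℝ) ≤ 1 by norm_num)]
    refine StronglyMeasurable.measurable ?_
    refine StronglyMeasurable.integral_prod_right'
      (f := fun p : ℝ × ℝ => Real.exp (c * p.1 * p.2) * (outer δ p.2 * w α p.2)) ?_
    refine Measurable.stronglyMeasurable ?_
    have h1 := (measurable_outer δ).comp (measurable_snd : Measurable (Prod.snd : ℝ × ℝ → ℝ))
    have h2 := (measurable_w α).comp (measurable_snd : Measurable (Prod.snd : ℝ × ℝ → ℝ))
    exact (by fun_prop : Measurable fun p : ℝ × ℝ => Real.exp (c * p.1 * p.2)).mul (h1.mul h2)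
  have hgb : ∀ x ∈ Set.Ioc (-1:ℝ) 1,
      |g x| ≤ Real.exp c * ∫ y in (-1:ℝ)..1, outer δ y * w α y := by
    intro x hx
    rw [abs_of_nonneg, ← intervalIntegral.integral_const_mul]
    · refine intervalIntegral.integral_mono_on_of_le_Ioo (by norm_num)
        (intervalIntegrable_kernel hc hα δ hx) (hi.const_mul _) fun y hy => ?_
      exact mul_le_mul_of_nonneg_right (exp_le_exp_of_mem hc hx ⟨hy.1, hy.2.le⟩)
        (mul_nonneg (outer_nonneg _ _) (w_nonneg hy.1.le hy.2.le))
    · refine intervalIntegral.integral_nonneg (by norm_num) fun y hy => ?_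
      exact mul_nonneg (Real.exp_pos _).le
        (mul_nonneg (outer_nonneg _ _) (w_nonneg hy.1 hy.2))
  have hlow : M * ∫ x in (-1:ℝ)..1, outer δ x * w α x ≤
      ∫ x in (-1:ℝ)..1, g x * (outer δ x * w α x) := by
    rw [← intervalIntegral.integral_const_mul]
    refine intervalIntegral.integral_mono_on_of_le_Ioo (by norm_num) (hi.const_mul _)
      (intervalIntegrable_mul_outer_w hα δ hgm hgb) fun x hx => ?_
    by_cases hδx : δ ≤ |x|
    · exact mul_le_mul_of_nonneg_right (inner_ge hc hα hδ0 hδ1 ⟨hx.1, hx.2.le⟩ hδx)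
        (mul_nonneg (outer_nonneg _ _) (w_nonneg hx.1.le hx.2.le))
    · simp [outer, hδx]
  exact le_of_mul_le_mul_right (hlow.trans key) (integral_outer_w_pos hα hδ0 hδ1)

/-! ### Numerical comparison of the constants -/

lemma two_div_pi_lt : 2 / Real.pi < 0.64 := by
  rw [div_lt_iff₀ Real.pi_pos]
  linarith [Real.pi_gt_d2]

lemma weight_rpow_eq {α γ : ℝ} (hγ0 : 0 < γ) (hγ1 : γ < 1) :
    (1 - γ ^ 2) ^ (α - 1/2) = (1 - γ) ^ α * (1 + γ) ^ α / Real.sqrt (1 - γ ^ 2) := by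
  rw [Real.rpow_sub (by nlinarith), ← Real.sqrt_eq_rpow,
    ← Real.mul_rpow (by linarith) (by linarith)]
  ring_nf

/-- Reduction for the choice `δ = γ`: it is enough to compare `k` with `(1 + γ)^α`. -/
lemma const_le {α γ k : ℝ} (hγ0 : 0 < γ) (hγ1 : γ < 1)
    (hk : Real.sqrt (2 / Real.pi) * (1 - γ) * (1 + γ) ^ α ≤ k * Real.sqrt (1 - γ ^ 2)) :
    Real.sqrt (2 / Real.pi) * (1 - γ) ^ 2 * (1 - γ ^ 2) ^ (α - 1/2) ≤ k * (1 - γ) ^ (α + 1) := by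
  have hs : 0 < Real.sqrt (1 - γ ^ 2) := Real.sqrt_pos.mpr (by nlinarith)
  have h1 : 0 < (1 - γ) ^ α := Real.rpow_pos_of_pos (by linarith) _
  rw [weight_rpow_eq hγ0 hγ1, Real.rpow_add_one (by linarith), mul_div_assoc', div_le_iff₀ hs]
  have := mul_le_mul_of_nonneg_left hk (mul_pos h1 (sub_pos.mpr hγ1)).le
  nlinarith [this]

lemma two_rpow_le {α x : ℝ} (hα : α < 0) (h0 : 0 < x) (h1 : x ≤ 1) :
    (2:ℝ) ^ α ≤ (1 + x) ^ α :=
  Real.rpow_le_rpow_of_nonpos (by linarith) (by linarith) hα.le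

/-- lower bound on any `ν` dominating the quadratic form of `L_c^α`. -/
theorem stmt4 (c α γ ν : ℝ) (hc : 0 < c) (hα : -(1/2) < α) (hγ0 : 0 < γ) (hγ1 : γ < 1)
    (h : ∀ f : ℝ → ℝ, MemL2 α f →
      (∫ x in (-1:ℝ)..1, ∫ y in (-1:ℝ)..1,
          Real.exp (c * x * y) * f x * f y * w α x * w α y) ≤
        ν * ∫ x in (-1:ℝ)..1, f x ^ 2 * w α x) :
    ν ≥ Real.sqrt (2 / Real.pi) * (1 - γ) ^ 2 * (1 - γ ^ 2) ^ (α - 1/2) / (α + 1) *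
      Real.exp (γ ^ 2 * c) := by
  have hα1 : 0 < α + 1 := by linarith
  -- The choice `δ = γ`, where `2 cosh (cγ²) ≥ e^{cγ²}` suffices.
  have main : ∀ k : ℝ, (∀ x, γ ≤ x → x ≤ 1 → k ≤ (1 + x) ^ α) →
      Real.sqrt (2 / Real.pi) * (1 - γ) * (1 + γ) ^ α ≤ k * Real.sqrt (1 - γ ^ 2) →
      ν ≥ Real.sqrt (2 / Real.pi) * (1 - γ) ^ 2 * (1 - γ ^ 2) ^ (α - 1/2) / (α + 1) *
        Real.exp (γ ^ 2 * c) := by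
    intro k hk hk2
    have h1 := ge_of_form_le hc hα hγ0 hγ1 h
    have h2 := le_integral_w hα hγ0 hγ1 hk
    have h3 := div_le_div_of_nonneg_right (const_le hγ0 hγ1 hk2) hα1.le
    rw [mul_div_assoc k] at h3
    have h4 := mul_le_mul_of_nonneg_right (h3.trans h2) (Real.exp_pos (c * γ ^ 2)).le
    have h5 := mul_pos (Real.exp_pos (-(c * γ ^ 2))) (integral_w_pos hα hγ0 hγ1)
    rw [mul_comm (γ ^ 2) c]
    nlinarith
  rcases le_or_gt 0 α with hα0 | hα0
  · refine main ((1 + γ) ^ α) (fun x hx _ =>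
      Real.rpow_le_rpow (by linarith) (by linarith) hα0) ?_
    have hp : 0 < (1 + γ) ^ α := Real.rpow_pos_of_pos (by linarith) _
    have h1 : Real.sqrt (2 / Real.pi) ≤ 1 :=
      Real.sqrt_le_one.mpr (two_div_pi_lt.le.trans (by norm_num))
    have h2 : 1 - γ ≤ Real.sqrt (1 - γ ^ 2) := Real.le_sqrt_of_sq_le (by nlinarith)
    rw [mul_comm]
    refine mul_le_mul_of_nonneg_left (le_trans ?_ h2) hp.le
    exact mul_le_of_le_one_left (by linarith) h1
  rcases le_or_gt (1/10) γ with hγ | hγ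
  · refine main (2 ^ α) (fun x hx hx1 => two_rpow_le hα0 (by linarith) hx1) ?_
    have hp : 0 < (1 + γ) ^ α := Real.rpow_pos_of_pos (by linarith) _
    -- `(2 / (1 + γ))^α ≥ (2 / (1 + γ))^{-1/2} = √((1 + γ) / 2)`
    have h1 : Real.sqrt ((1 + γ) / 2) * (1 + γ) ^ α ≤ 2 ^ α := by
      rw [← le_div_iff₀ hp, ← Real.div_rpow (by norm_num) (by linarith), Real.sqrt_eq_rpow]
      have h2 : ((1 + γ) / 2) ^ (1/2 : ℝ) = (2 / (1 + γ)) ^ (-(1/2) : ℝ) := by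
        rw [Real.rpow_neg (by positivity), ← Real.inv_rpow (by positivity), inv_div]
      rw [h2]
      refine Real.rpow_le_rpow_of_exponent_le ?_ hα.le
      rw [le_div_iff₀ (by linarith)]
      linarith
    have h3 : Real.sqrt (2 / Real.pi) * (1 - γ) ≤
        Real.sqrt ((1 + γ) / 2) * Real.sqrt (1 - γ ^ 2) := by
      rw [← Real.sqrt_mul (by linarith)]
      refine Real.le_sqrt_of_sq_le ?_
      rw [mul_pow, Real.sq_sqrt (by positivity)]
      have h4 : 2 / Real.pi * (1 - γ) ^ 2 ≤ 0.64 * (1 - γ) ^ 2 :=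
        mul_le_mul_of_nonneg_right two_div_pi_lt.le (sq_nonneg _)
      have h5 : 0 ≤ (1 - γ) * ((1 + γ) ^ 2 / 2 - 0.64 * (1 - γ)) :=
        mul_nonneg (by linarith) (by nlinarith)
      nlinarith
    calc Real.sqrt (2 / Real.pi) * (1 - γ) * (1 + γ) ^ α
        ≤ Real.sqrt ((1 + γ) / 2) * Real.sqrt (1 - γ ^ 2) * (1 + γ) ^ α :=
          mul_le_mul_of_nonneg_right h3 hp.le
      _ = Real.sqrt ((1 + γ) / 2) * (1 + γ) ^ α * Real.sqrt (1 - γ ^ 2) := by ring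
      _ ≤ 2 ^ α * Real.sqrt (1 - γ ^ 2) := mul_le_mul_of_nonneg_right h1 (Real.sqrt_nonneg _)
  · have h1 := ge_of_form_le (δ := 1/5) hc hα (by norm_num) (by norm_num) h
    have h2 := le_integral_w (δ := 1/5) (k := 2 ^ α) hα (by norm_num) (by norm_num)
      (fun x hx hx1 => two_rpow_le hα0 (by linarith) hx1)
    have hK : (1 - γ) ^ 2 * (1 - γ ^ 2) ^ (α - 1/2) ≤ 1 := by
      have hb : 0 < 1 - γ ^ 2 := by nlinarith
      have h3 : (1 - γ ^ 2) ^ (α - 1/2) ≤ (1 - γ ^ 2) ^ (-1 : ℝ) :=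
        Real.rpow_le_rpow_of_exponent_ge hb (by nlinarith) (by linarith)
      rw [Real.rpow_neg_one] at h3
      calc (1 - γ) ^ 2 * (1 - γ ^ 2) ^ (α - 1/2) ≤ (1 - γ ^ 2) * (1 - γ ^ 2)⁻¹ :=
            mul_le_mul (by nlinarith) h3 (Real.rpow_nonneg hb.le _) hb.le
        _ = 1 := mul_inv_cancel₀ hb.ne'
    have hnum : Real.sqrt (2 / Real.pi) ≤ 3/2 * (2 ^ α * (1 - 1/5) ^ (α + 1)) := by
      have e1 : Real.sqrt (1/2) ≤ (2:ℝ) ^ α := by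
        have : Real.sqrt (1/2) = (2:ℝ) ^ (-(1/2) : ℝ) := by
          rw [Real.rpow_neg (by norm_num), ← Real.inv_rpow (by norm_num), Real.sqrt_eq_rpow]
          norm_num
        rw [this]
        exact Real.rpow_le_rpow_of_exponent_le (by norm_num) hα.le
      have e2 : (4/5 : ℝ) ≤ (1 - 1/5) ^ (α + 1) := by
        have := Real.rpow_le_rpow_of_exponent_ge (x := 1 - 1/5) (y := 1) (z := α + 1)
          (by norm_num) (by norm_num) (by linarith)
        rw [Real.rpow_one] at this
        linarith
      have e3 : (0.7 : ℝ) ≤ Real.sqrt (1/2) := Real.le_sqrt_of_sq_le (by norm_num)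
      have e4 : Real.sqrt (2 / Real.pi) ≤ 0.8 :=
        Real.sqrt_le_iff.mpr ⟨by norm_num, two_div_pi_lt.le.trans (by norm_num)⟩
      nlinarith
    have hA : 3/2 * Real.exp (γ ^ 2 * c) ≤
        Real.exp (c * (1/5) ^ 2) + Real.exp (-(c * (1/5) ^ 2)) := by
      set u := Real.exp (c / 100) with hu
      have hu1 : 1 ≤ u := Real.one_le_exp (by positivity)
      have a1 : Real.exp (γ ^ 2 * c) ≤ u := by
        have hγ2 : γ ^ 2 ≤ 1 / 100 := by nlinarith
        exact Real.exp_le_exp.mpr (by nlinarith)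
      have a2 : Real.exp (c * (1/5) ^ 2) = u ^ 4 := by
        rw [hu, ← Real.exp_nat_mul]; congr 1; push_cast; ring
      rw [Real.exp_neg, a2]
      have hu4 : 0 < u ^ 4 := by positivity
      have a3 : 3/2 * u ≤ u ^ 4 + (u ^ 4)⁻¹ := by
        have hinv : 0 < (u ^ 4)⁻¹ := inv_pos.mpr hu4
        rcases le_or_gt (6/5) u with hu2 | hu2
        · have h3 : (6/5 : ℝ) ^ 3 ≤ u ^ 3 := pow_le_pow_left₀ (by norm_num) hu2 3
          nlinarith
        · have hm : u ^ 4 * (u ^ 4)⁻¹ = 1 := mul_inv_cancel₀ hu4.ne'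
          nlinarith [sq_nonneg (u ^ 4 - (u ^ 4)⁻¹)]
      linarith
    set P : ℝ := 2 ^ α * (1 - 1/5) ^ (α + 1) with hP
    have hP0 : 0 < P := mul_pos (Real.rpow_pos_of_pos (by norm_num) _)
      (Real.rpow_pos_of_pos (by norm_num) _)
    calc Real.sqrt (2 / Real.pi) * (1 - γ) ^ 2 * (1 - γ ^ 2) ^ (α - 1/2) / (α + 1) *
          Real.exp (γ ^ 2 * c)
        ≤ 3/2 * P / (α + 1) * Real.exp (γ ^ 2 * c) := by
          refine mul_le_mul_of_nonneg_right ?_ (Real.exp_pos _).le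
          refine div_le_div_of_nonneg_right ?_ hα1.le
          rw [mul_assoc]
          exact (mul_le_of_le_one_right (Real.sqrt_nonneg _) hK).trans hnum
      _ = (3/2 * Real.exp (γ ^ 2 * c)) * (P / (α + 1)) := by ring
      _ ≤ (Real.exp (c * (1/5) ^ 2) + Real.exp (-(c * (1/5) ^ 2))) * (P / (α + 1)) :=
          mul_le_mul_of_nonneg_right hA (div_pos hP0 hα1).le
      _ ≤ (Real.exp (c * (1/5) ^ 2) + Real.exp (-(c * (1/5) ^ 2))) *
            ∫ x in (1/5)..1, w α x := by
          refine mul_le_mul_of_nonneg_left ?_ (by positivity)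
          rwa [hP, mul_div_assoc]
      _ ≤ ν := h1
end

section
/- Let μ ≥ 1/2, x > 0 and 0 < γ < 1 be real numbers. Then ∫_{-1}^{1} (1-t²)^{μ-1/2} e^{xt} dt ≥ e^{γx} (1+γ)^{μ-1/2} (1-γ)^{μ+1/2} / (μ + 1/2). -/
/-! Discard the part of the integral over `[-1, γ]`, where the integrand is nonnegative. On `[γ, 1]`
one has `1 - t ^ 2 = (1 + t) * (1 - t) ≥ (1 + γ) * (1 - t)` and `exp (x * t) ≥ exp (γ * x)`, and
`∫ t in γ..1, (1 - t) ^ (μ - 1/2) = (1 - γ) ^ (μ + 1/2) / (μ + 1/2)`. -/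

open MeasureTheory

/-- lower bound for the integral `∫_{-1}^1 (1-t²)^{μ-1/2} e^{xt} dt`. -/
theorem stmt6 (μ x γ : ℝ) (hμ : 1/2 ≤ μ) (hx : 0 < x) (hγ0 : 0 < γ) (hγ1 : γ < 1) :
    Real.exp (γ * x) * (1 + γ) ^ (μ - 1/2) * (1 - γ) ^ (μ + 1/2) / (μ + 1/2) ≤
      ∫ t in (-1:ℝ)..1, (1 - t ^ 2) ^ (μ - 1/2) * Real.exp (x * t) := by
  have ha : 0 ≤ μ - 1/2 := by linarith
  have hcont : Continuous fun t : ℝ => (1 - t ^ 2) ^ (μ - 1/2) * Real.exp (x * t) :=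
    ((by fun_prop : Continuous fun t : ℝ => 1 - t ^ 2).rpow_const fun _ => Or.inr ha).mul
      (by fun_prop)
  have hcont' : Continuous fun t : ℝ => (1 - t) ^ (μ - 1/2) :=
    (by fun_prop : Continuous fun t : ℝ => 1 - t).rpow_const fun _ => Or.inr ha
  have hint : ∫ t in γ..1, (1 - t) ^ (μ - 1/2) = (1 - γ) ^ (μ + 1/2) / (μ + 1/2) := by
    rw [intervalIntegral.integral_comp_sub_left (fun u : ℝ => u ^ (μ - 1/2)) 1,
      integral_rpow (Or.inl (by linarith)), sub_self,
      show μ - 1/2 + 1 = μ + 1/2 by ring, Real.zero_rpow (by linarith), sub_zero]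
  have hleft : 0 ≤ ∫ t in (-1:ℝ)..γ, (1 - t ^ 2) ^ (μ - 1/2) * Real.exp (x * t) := by
    refine intervalIntegral.integral_nonneg (by linarith) fun t ht => ?_
    have : 0 ≤ 1 - t ^ 2 := by nlinarith [ht.1, ht.2]
    positivity
  have hright : ∫ t in γ..1, Real.exp (γ * x) * (1 + γ) ^ (μ - 1/2) * (1 - t) ^ (μ - 1/2) ≤
      ∫ t in γ..1, (1 - t ^ 2) ^ (μ - 1/2) * Real.exp (x * t) := by
    refine intervalIntegral.integral_mono_on hγ1.le
      ((hcont'.const_mul _).intervalIntegrable _ _) (hcont.intervalIntegrable _ _) fun t ht => ?_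
    have h1t : 0 ≤ 1 - t := by linarith [ht.2]
    have hexp : Real.exp (γ * x) ≤ Real.exp (x * t) :=
      Real.exp_le_exp.2 (by nlinarith [ht.1])
    have hpow : ((1 + γ) * (1 - t)) ^ (μ - 1/2) ≤ (1 - t ^ 2) ^ (μ - 1/2) :=
      Real.rpow_le_rpow (by positivity) (by nlinarith [ht.1]) ha
    rw [mul_assoc, ← Real.mul_rpow (by linarith) h1t, mul_comm]
    exact mul_le_mul hpow hexp (Real.exp_pos _).le
      ((Real.rpow_nonneg (by positivity) _).trans hpow)
  rw [intervalIntegral.integral_const_mul, hint, ← mul_div_assoc] at hright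
  rw [← intervalIntegral.integral_add_adjacent_intervals
    (hcont.intervalIntegrable (-1) γ) (hcont.intervalIntegrable γ 1)]
  linarith
end

section
/- Let c > 0 and α > -1/2 be real numbers. Let χ > 0 be a real number with χ ≥ 6(α+1)/(α+3), and set q = c²/χ; assume q ≤ α + 1/2 if -1/2 < α ≤ 0, and q ≤ min(1, α + 1/2) if α > 0. Let φ : [-1,1] → ℝ be twice continuously differentiable on [-1,1], either even or odd, normalized so that ∫_{-1}^{1} φ(t)² (1-t²)^α dt = 1, and satisfying for all x ∈ (-1,1) the differential equation d/dx[ (1-x²)^{α+1} φ'(x) ] + c² x² (1-x²)^α φ(x) = -χ (1-x²)^α φ(x). Then sup_{t ∈ [-1,1]} |φ(t)| = |φ(1)| and |φ(1)| ≤ 3 √(α+1) χ^{(α+1)/2}. -/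
/-!
Write `A = |φ 1|` and `P t = χ + c² t²`, so that `φ` solves
`(1 - t²) φ'' - 2 (α + 1) t φ' + P φ = 0`.

*The supremum is attained at `1`.* The Sonine function `K = φ² + (1 - t²) φ'² / P` has derivative
`2 t φ'² ((2α + 1) P - c² (1 - t²)) / P²`, which is nonnegative on `[0, 1]` because
`c² ≤ (α + 1/2) χ`. Hence `φ² ≤ K ≤ K 1 = A²` on `[0, 1]`, and parity gives the other half.

*The bound on `A`.* Integrating the equation from `t` to `1` and using `|φ| ≤ A` yields
`|φ' t| ≤ (χ + c²) A / (2 (α + 1) t₀)` on `[t₀, 1)`, so that on `[t₀, 1]` the function `φ` differs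
from its endpoint value by at most `D A`, where `D = (χ + c²) (1 - t₀) / (2 (α + 1) t₀)`:
`|φ t| ≥ (1 - D) A`. If `D ≤ 1 - m`, the normalization then gives, by parity,
`1 ≥ 2 ∫_{t₀}^1 m² A² t (1 - t²)^α dt = m² A² (1 - t₀²)^(α + 1) / (α + 1)`.
The choice `1 - t₀² = 1 / χ`, `m = 1/3` concludes for `α > 0`, and `1 - t₀² = 1 / (2 χ)`,
`m = 1/2` for `α ≤ 0`; the lower bound on `χ` keeps `t₀` far enough from `0`.
-/

open MeasureTheory

/-- The flux equation in non-divergence form. -/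
lemma ode_expanded {c α χ x y z v : ℝ} {g : ℝ → ℝ} (hx : x ∈ Set.Ioo (-1:ℝ) 1)
    (hg : HasDerivAt g z x) (hy : g x = y)
    (h : HasDerivAt (fun t => (1 - t ^ 2) ^ (α + 1) * g t)
        (-χ * (1 - x ^ 2) ^ α * v - c ^ 2 * x ^ 2 * (1 - x ^ 2) ^ α * v) x) :
    (1 - x ^ 2) * z = 2 * (α + 1) * x * y - (χ + c ^ 2 * x ^ 2) * v := by
  have hpos : 0 < 1 - x ^ 2 := by nlinarith [hx.1, hx.2]
  have h1 : HasDerivAt (fun t : ℝ => 1 - t ^ 2) (-(2 * x)) x := by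
    simpa using (hasDerivAt_pow 2 x).const_sub 1
  have h2 := (h1.rpow_const (p := α + 1) (Or.inl hpos.ne')).mul hg
  have h3 := h.unique h2
  have hw : 0 < (1 - x ^ 2) ^ α := Real.rpow_pos_of_pos hpos _
  rw [add_sub_cancel_right, Real.rpow_add_one hpos.ne', hy] at h3
  have : (1 - x ^ 2) ^ α * ((1 - x ^ 2) * z
      - (2 * (α + 1) * x * y - (χ + c ^ 2 * x ^ 2) * v)) = 0 := by linear_combination -h3
  rcases mul_eq_zero.1 this with h | h
  · exact absurd h hw.ne'
  · linarith

/-- Monotonicity of the Sonine function `φ² + (1 - t²) φ'² / (χ + c² t²)` on `[0, 1]`, read off at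
the endpoint `1`. -/
lemma sq_le_sq_at_one {c α χ : ℝ} (hα : -(1/2) < α) (hχ : 0 < χ) (hq : c ^ 2 ≤ (α + 1/2) * χ)
    {φ φ' φ'' : ℝ → ℝ}
    (h1 : ∀ x ∈ Set.Ioo (0:ℝ) 1, HasDerivAt φ (φ' x) x)
    (h2 : ∀ x ∈ Set.Ioo (0:ℝ) 1, HasDerivAt φ' (φ'' x) x)
    (hc1 : ContinuousOn φ (Set.Icc 0 1)) (hc2 : ContinuousOn φ' (Set.Icc 0 1))
    (hode : ∀ x ∈ Set.Ioo (0:ℝ) 1,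
      (1 - x ^ 2) * φ'' x = 2 * (α + 1) * x * φ' x - (χ + c ^ 2 * x ^ 2) * φ x)
    {t : ℝ} (ht : t ∈ Set.Icc (0:ℝ) 1) : φ t ^ 2 ≤ φ 1 ^ 2 := by
  have hP : ∀ x : ℝ, 0 < χ + c ^ 2 * x ^ 2 := fun x => by positivity
  have hmono : MonotoneOn (fun t => φ t ^ 2 + (1 - t ^ 2) * φ' t ^ 2 / (χ + c ^ 2 * t ^ 2))
      (Set.Icc 0 1) := by
    apply monotoneOn_of_hasDerivWithinAt_nonneg (convex_Icc 0 1)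
      (f' := fun x => 2 * x * φ' x ^ 2 *
        ((2 * α + 1) * (χ + c ^ 2 * x ^ 2) - c ^ 2 * (1 - x ^ 2)) / (χ + c ^ 2 * x ^ 2) ^ 2)
    · refine (hc1.pow 2).add (ContinuousOn.div ?_ (by fun_prop) fun x _ => (hP x).ne')
      exact ContinuousOn.mul (by fun_prop) (hc2.pow 2)
    · intro x hx
      rw [interior_Icc] at hx ⊢
      have d1 : HasDerivAt (fun t : ℝ => 1 - t ^ 2) (-(2 * x)) x := by
        simpa using (hasDerivAt_pow 2 x).const_sub 1
      have d2 : HasDerivAt (fun t : ℝ => χ + c ^ 2 * t ^ 2) (c ^ 2 * (2 * x)) x := by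
        simpa using ((hasDerivAt_pow 2 x).const_mul (c ^ 2)).const_add χ
      have d := ((h1 x hx).pow 2).add ((d1.mul ((h2 x hx).pow 2)).div d2 (hP x).ne')
      refine (d.congr_deriv ?_).hasDerivWithinAt
      have := hode x hx
      have hPx := (hP x).ne'
      simp only [Pi.pow_apply, Nat.cast_ofNat, Nat.add_one_sub_one, pow_one, Pi.mul_apply]
      field_simp
      linear_combination φ' x * (χ + c ^ 2 * x ^ 2) * this
    · intro x hx
      rw [interior_Icc] at hx
      have hx0 := hx.1
      have hs : 0 ≤ (2 * α + 1) * (χ + c ^ 2 * x ^ 2) - c ^ 2 * (1 - x ^ 2) := by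
        have : 0 ≤ (2 * α + 1) * (c ^ 2 * x ^ 2) := mul_nonneg (by linarith) (by positivity)
        nlinarith [sq_nonneg (c * x), sq_nonneg c]
      positivity
  have h := hmono ht (Set.right_mem_Icc.2 zero_le_one) ht.2
  have : 0 ≤ (1 - t ^ 2) * φ' t ^ 2 / (χ + c ^ 2 * t ^ 2) :=
    div_nonneg (mul_nonneg (by nlinarith [ht.1, ht.2]) (sq_nonneg _)) (hP t).le
  simp only [one_pow, sub_self, zero_mul, zero_div, add_zero] at h
  linarith

/-- The derivative of `-(1 - t²)^(α + 1) / (2 (α + 1))` is `t (1 - t²)^α`. -/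
lemma hasDerivAt_weight {α x : ℝ} (hα : 0 < α + 1) (hx : x ∈ Set.Ioo (-1:ℝ) 1) :
    HasDerivAt (fun t : ℝ => -((1 - t ^ 2) ^ (α + 1) / (2 * (α + 1)))) (x * (1 - x ^ 2) ^ α) x := by
  have hpos : 0 < 1 - x ^ 2 := by nlinarith [hx.1, hx.2]
  have h1 : HasDerivAt (fun t : ℝ => 1 - t ^ 2) (-(2 * x)) x := by
    simpa using (hasDerivAt_pow 2 x).const_sub 1
  refine (((h1.rpow_const (p := α + 1) (Or.inl hpos.ne')).div_const
    (2 * (α + 1))).neg).congr_deriv ?_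
  rw [add_sub_cancel_right]
  field_simp

lemma continuous_weight {α : ℝ} (hα : 0 < α + 1) :
    Continuous (fun t : ℝ => (1 - t ^ 2) ^ (α + 1)) :=
  Continuous.rpow_const (by fun_prop) fun _ => Or.inr hα.le

/-- Bound for the derivative near `1`: the flux `(1 - t²)^(α + 1) g` vanishes at `1`, and it is
dominated there by `C (1 - t²)^(α + 1) / (2 (α + 1) t₀)`, whose derivative is at most
`-C (1 - t²)^α` on `[t₀, 1)`. -/
lemma abs_deriv_le {α t₀ C : ℝ} (hα : 0 < α + 1) (h0 : 0 < t₀) (hC : 0 ≤ C)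
    {g r : ℝ → ℝ} (hg : ContinuousOn g (Set.Icc t₀ 1))
    (hr : ∀ x ∈ Set.Ioo t₀ 1, |r x| ≤ C)
    (hd : ∀ x ∈ Set.Ioo t₀ 1,
      HasDerivAt (fun t => (1 - t ^ 2) ^ (α + 1) * g t) ((1 - x ^ 2) ^ α * r x) x)
    {t : ℝ} (ht : t ∈ Set.Ico t₀ 1) : |g t| ≤ C / (2 * (α + 1) * t₀) := by
  have hw1 : (1 - (1:ℝ) ^ 2) ^ (α + 1) = 0 := by
    rw [one_pow, sub_self, Real.zero_rpow hα.ne']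
  -- Treating both signs at once: `ε = ± 1`.
  have key : ∀ ε : ℝ, |ε| = 1 → ε * g t ≤ C / (2 * (α + 1) * t₀) := by
    intro ε hε
    have hmono : MonotoneOn (fun t => C / t₀ * -((1 - t ^ 2) ^ (α + 1) / (2 * (α + 1)))
        + ε * ((1 - t ^ 2) ^ (α + 1) * g t)) (Set.Icc t₀ 1) := by
      apply monotoneOn_of_hasDerivWithinAt_nonneg (convex_Icc t₀ 1)
        (f' := fun x => C / t₀ * (x * (1 - x ^ 2) ^ α) + ε * ((1 - x ^ 2) ^ α * r x))
      · refine ContinuousOn.add (continuous_const.mul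
          ((continuous_weight hα).div_const _).neg).continuousOn (continuousOn_const.mul ?_)
        exact (continuous_weight hα).continuousOn.mul hg
      · intro x hx
        rw [interior_Icc] at hx ⊢
        exact (((hasDerivAt_weight hα ⟨by linarith [hx.1], hx.2⟩).const_mul _).add
          ((hd x hx).const_mul ε)).hasDerivWithinAt
      · intro x hx
        rw [interior_Icc] at hx
        have hpos : 0 < 1 - x ^ 2 := by nlinarith [hx.1, hx.2]
        have hw : 0 < (1 - x ^ 2) ^ α := Real.rpow_pos_of_pos hpos _
        have e1 : C ≤ C / t₀ * x := by
          rw [div_mul_eq_mul_div, le_div_iff₀ h0]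
          exact mul_le_mul_of_nonneg_left hx.1.le hC
        have e2 : -C ≤ ε * r x := by
          have : |ε * r x| ≤ C := by rw [abs_mul, hε, one_mul]; exact hr x hx
          exact (abs_le.1 this).1
        have : 0 ≤ (1 - x ^ 2) ^ α * (C / t₀ * x + ε * r x) :=
          mul_nonneg hw.le (by linarith)
        linarith
    have h := hmono ⟨ht.1, ht.2.le⟩ (Set.right_mem_Icc.2 (ht.1.trans ht.2.le)) ht.2.le
    simp only [hw1, zero_div, neg_zero, mul_zero, zero_mul, add_zero] at h
    have hpos : 0 < 1 - t ^ 2 := by nlinarith [ht.1, ht.2]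
    have hw : 0 < (1 - t ^ 2) ^ (α + 1) := Real.rpow_pos_of_pos hpos _
    have h' : (1 - t ^ 2) ^ (α + 1) * (ε * g t)
        ≤ (1 - t ^ 2) ^ (α + 1) * (C / (2 * (α + 1) * t₀)) := by
      have e : C / t₀ * -((1 - t ^ 2) ^ (α + 1) / (2 * (α + 1)))
        = -((1 - t ^ 2) ^ (α + 1) * (C / (2 * (α + 1) * t₀))) := by field_simp
      rw [e] at h
      linarith
    exact le_of_mul_le_mul_left h' hw
  have k1 := key 1 (by simp)
  have k2 := key (-1) (by simp)
  exact abs_le.2 ⟨by linarith, by linarith⟩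

/-- A lower bound `m A` for `|φ|` on `t₀ ≤ |t| ≤ 1` turns the normalization into an upper bound
for `A`. -/
lemma sq_mul_rpow_le {α t₀ m A : ℝ} (hα : 0 < α + 1) (h0 : 0 < t₀) (h1 : t₀ < 1)
    (hm : 0 ≤ m) (hA : 0 ≤ A) {φ : ℝ → ℝ} (hpar : ∀ x, φ (-x) ^ 2 = φ x ^ 2)
    (hlow : ∀ t ∈ Set.Icc t₀ 1, m * A ≤ |φ t|)
    (hnorm : ∫ t in (-1:ℝ)..1, φ t ^ 2 * (1 - t ^ 2) ^ α = 1) :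
    m ^ 2 * A ^ 2 * (1 - t₀ ^ 2) ^ (α + 1) ≤ α + 1 := by
  -- A non-integrable function would have integral `0`, not `1`.
  have hint : IntervalIntegrable (fun t => φ t ^ 2 * (1 - t ^ 2) ^ α) volume (-1) 1 := by
    by_contra h
    rw [intervalIntegral.integral_undef h] at hnorm
    norm_num at hnorm
  have hsub : ∀ a b : ℝ, -1 ≤ a → a ≤ b → b ≤ 1 →
      IntervalIntegrable (fun t => φ t ^ 2 * (1 - t ^ 2) ^ α) volume a b := by
    intro a b ha hab hb
    apply hint.mono_set
    rw [Set.uIcc_of_le hab, Set.uIcc_of_le (by norm_num)]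
    exact Set.Icc_subset_Icc ha hb
  have hnn : 0 ≤ ∫ t in (-t₀)..t₀, φ t ^ 2 * (1 - t ^ 2) ^ α := by
    apply intervalIntegral.integral_nonneg (by linarith)
    intro u hu
    exact mul_nonneg (sq_nonneg _) (Real.rpow_nonneg (by nlinarith [hu.1, hu.2]) _)
  have hneg : ∫ t in (-1:ℝ)..(-t₀), φ t ^ 2 * (1 - t ^ 2) ^ α
      = ∫ t in t₀..1, φ t ^ 2 * (1 - t ^ 2) ^ α := by
    rw [← intervalIntegral.integral_comp_neg]
    simp [hpar]
  have hsplit : 2 * ∫ t in t₀..1, φ t ^ 2 * (1 - t ^ 2) ^ α ≤ 1 := by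
    have e1 := intervalIntegral.integral_add_adjacent_intervals
      (hsub (-1) (-t₀) le_rfl (by linarith) (by linarith))
      (hsub (-t₀) t₀ (by linarith) (by linarith) (by linarith))
    have e2 := intervalIntegral.integral_add_adjacent_intervals
      (hsub (-1) t₀ le_rfl (by linarith) (by linarith))
      (hsub t₀ 1 (by linarith) (by linarith) le_rfl)
    linarith
  have hcont : ContinuousOn (fun t : ℝ => -((1 - t ^ 2) ^ (α + 1) / (2 * (α + 1))))
      (Set.Icc t₀ 1) := ((continuous_weight hα).div_const _).neg.continuousOn
  have hder : ∀ x ∈ Set.Ioo t₀ 1,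
      HasDerivAt (fun t : ℝ => -((1 - t ^ 2) ^ (α + 1) / (2 * (α + 1)))) (x * (1 - x ^ 2) ^ α) x :=
    fun x hx => hasDerivAt_weight hα ⟨by linarith [hx.1], hx.2⟩
  have hwint : IntervalIntegrable (fun x : ℝ => x * (1 - x ^ 2) ^ α) volume t₀ 1 := by
    rw [intervalIntegrable_iff_integrableOn_Ioc_of_le h1.le]
    apply intervalIntegral.integrableOn_deriv_of_nonneg hcont hder
    intro x hx
    exact mul_nonneg (by linarith [hx.1]) (Real.rpow_nonneg (by nlinarith [hx.1, hx.2]) _)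
  have hval := intervalIntegral.integral_eq_sub_of_hasDerivAt_of_le h1.le hcont hder hwint
  have hle : ∫ t in t₀..1, m ^ 2 * A ^ 2 * (t * (1 - t ^ 2) ^ α)
      ≤ ∫ t in t₀..1, φ t ^ 2 * (1 - t ^ 2) ^ α := by
    apply intervalIntegral.integral_mono_on h1.le (hwint.const_mul _)
      (hsub t₀ 1 (by linarith) h1.le le_rfl)
    intro t ht
    have hw : 0 ≤ (1 - t ^ 2) ^ α := Real.rpow_nonneg (by nlinarith [ht.1, ht.2]) _
    have : m ^ 2 * A ^ 2 ≤ φ t ^ 2 := by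
      rw [← mul_pow, ← sq_abs (φ t)]
      exact pow_le_pow_left₀ (by positivity) (hlow t ht) 2
    have h2 : m ^ 2 * A ^ 2 * t ≤ φ t ^ 2 := by nlinarith [ht.1, ht.2, sq_nonneg (m * A)]
    nlinarith [mul_le_mul_of_nonneg_right h2 hw]
  rw [intervalIntegral.integral_const_mul, hval, one_pow, sub_self, Real.zero_rpow hα.ne'] at hle
  have h3 : m ^ 2 * A ^ 2 * ((1 - t₀ ^ 2) ^ (α + 1) / (α + 1)) ≤ 1 := by
    refine le_trans (le_of_eq ?_) ((mul_le_mul_of_nonneg_left hle (by norm_num : (0:ℝ) ≤ 2)).trans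
      hsplit)
    field_simp
    ring
  rw [← mul_div_assoc, div_le_one hα] at h3
  exact h3

/-- uniform bound for eigenfunctions of the Sturm-Liouville operator. -/
theorem stmt9 (c α χ : ℝ) (hc : 0 < c) (hα : -(1/2) < α) (hχ : 0 < χ)
    (hχ6 : 6 * (α + 1) / (α + 3) ≤ χ)
    (hq1 : α ≤ 0 → c ^ 2 / χ ≤ α + 1/2)
    (hq2 : 0 < α → c ^ 2 / χ ≤ min 1 (α + 1/2))
    (φ φ' φ'' : ℝ → ℝ)
    (hd1 : ∀ x ∈ Set.Icc (-1:ℝ) 1, HasDerivWithinAt φ (φ' x) (Set.Icc (-1:ℝ) 1) x)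
    (hd2 : ∀ x ∈ Set.Icc (-1:ℝ) 1, HasDerivWithinAt φ' (φ'' x) (Set.Icc (-1:ℝ) 1) x)
    (hc2 : ContinuousOn φ'' (Set.Icc (-1:ℝ) 1))
    (hpar : (∀ x, φ (-x) = φ x) ∨ (∀ x, φ (-x) = - φ x))
    (hnorm : ∫ t in (-1:ℝ)..1, φ t ^ 2 * (1 - t ^ 2) ^ α = 1)
    (hode : ∀ x ∈ Set.Ioo (-1:ℝ) 1,
      HasDerivAt (fun t => (1 - t ^ 2) ^ (α + 1) * φ' t)
        (-χ * (1 - x ^ 2) ^ α * φ x - c ^ 2 * x ^ 2 * (1 - x ^ 2) ^ α * φ x) x) :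
    (∀ t ∈ Set.Icc (-1:ℝ) 1, |φ t| ≤ |φ 1|) ∧
      |φ 1| ≤ 3 * Real.sqrt (α + 1) * χ ^ ((α + 1) / 2) := by
  have hα1 : 0 < α + 1 := by linarith
  have hq : c ^ 2 ≤ (α + 1/2) * χ := by
    rw [← div_le_iff₀ hχ]
    rcases le_or_gt α 0 with h | h
    · exact hq1 h
    · exact (hq2 h).trans (min_le_right _ _)
  have hIcc : ∀ x ∈ Set.Ioo (-1:ℝ) 1, Set.Icc (-1:ℝ) 1 ∈ nhds x :=
    fun x hx => Icc_mem_nhds hx.1 hx.2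
  have hD1 : ∀ x ∈ Set.Ioo (-1:ℝ) 1, HasDerivAt φ (φ' x) x :=
    fun x hx => (hd1 x ⟨hx.1.le, hx.2.le⟩).hasDerivAt (hIcc x hx)
  have hD2 : ∀ x ∈ Set.Ioo (-1:ℝ) 1, HasDerivAt φ' (φ'' x) x :=
    fun x hx => (hd2 x ⟨hx.1.le, hx.2.le⟩).hasDerivAt (hIcc x hx)
  have hC1 : ContinuousOn φ (Set.Icc (-1:ℝ) 1) := fun x hx => (hd1 x hx).continuousWithinAt
  have hC2 : ContinuousOn φ' (Set.Icc (-1:ℝ) 1) := fun x hx => (hd2 x hx).continuousWithinAt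
  have hsq : ∀ x, φ (-x) ^ 2 = φ x ^ 2 := by
    intro x
    rcases hpar with h | h <;> rw [h x]
    ring
  have hhalf : ∀ t ∈ Set.Icc (0:ℝ) 1, φ t ^ 2 ≤ φ 1 ^ 2 := by
    intro t ht
    have hs : ∀ x ∈ Set.Ioo (0:ℝ) 1, x ∈ Set.Ioo (-1:ℝ) 1 :=
      fun x hx => ⟨by linarith [hx.1], hx.2⟩
    have hI : Set.Icc (0:ℝ) 1 ⊆ Set.Icc (-1) 1 := Set.Icc_subset_Icc (by norm_num) le_rfl
    exact sq_le_sq_at_one hα hχ hq (fun x hx => hD1 x (hs x hx)) (fun x hx => hD2 x (hs x hx))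
      (hC1.mono hI) (hC2.mono hI)
      (fun x hx => ode_expanded (hs x hx) (hD2 x (hs x hx)) rfl (hode x (hs x hx))) ht
  have hsup : ∀ t ∈ Set.Icc (-1:ℝ) 1, |φ t| ≤ |φ 1| := by
    intro t ht
    rw [← sq_le_sq]
    rcases le_total 0 t with h | h
    · exact hhalf t ⟨h, ht.2⟩
    · rw [← hsq t]
      exact hhalf (-t) ⟨by linarith, by linarith [ht.1]⟩
  refine ⟨hsup, ?_⟩
  set A := |φ 1| with hAdef
  have hA : 0 ≤ A := abs_nonneg _
  have hlow : ∀ t₀ m : ℝ, 0 < t₀ → t₀ < 1 →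
      (α + 3/2) * χ * (1 - t₀) ≤ (1 - m) * (2 * (α + 1) * t₀) →
      ∀ t ∈ Set.Icc t₀ 1, m * A ≤ |φ t| := by
    intro t₀ m h0 h1 hm t ht
    have hI : Set.Icc t₀ 1 ⊆ Set.Icc (-1) 1 := Set.Icc_subset_Icc (by linarith) le_rfl
    have hCA : 0 ≤ (χ + c ^ 2) * A := by positivity
    have hb : ∀ s ∈ Set.Ico t₀ 1, |φ' s| ≤ (χ + c ^ 2) * A / (2 * (α + 1) * t₀) := by
      intro s hs
      refine abs_deriv_le (r := fun x => -((χ + c ^ 2 * x ^ 2) * φ x)) hα1 h0 hCA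
        (hC2.mono hI) ?_ ?_ hs
      · intro x hx
        have hx' : x ∈ Set.Icc (-1:ℝ) 1 := ⟨by linarith [hx.1], hx.2.le⟩
        rw [abs_neg, abs_mul, abs_of_pos (by positivity)]
        refine mul_le_mul ?_ (hsup x hx') (abs_nonneg _) (by positivity)
        nlinarith [sq_nonneg c, hx.1, hx.2, mul_nonneg (sq_nonneg c)
          (show (0:ℝ) ≤ 1 - x ^ 2 by nlinarith [hx.1, hx.2])]
      · intro x hx
        refine (hode x ⟨by linarith [hx.1], hx.2⟩).congr_deriv ?_
        ring
    have hmv := norm_image_sub_le_of_norm_deriv_right_le_segment (f := φ) (f' := φ') (a := t)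
      (b := 1) (C := (χ + c ^ 2) * A / (2 * (α + 1) * t₀))
      (hC1.mono (Set.Icc_subset_Icc (by linarith [ht.1]) le_rfl))
      (fun x hx => (hD1 x ⟨by linarith [hx.1, ht.1], hx.2⟩).hasDerivWithinAt)
      (fun x hx => hb x ⟨ht.1.trans hx.1, hx.2⟩) 1 (Set.right_mem_Icc.2 ht.2)
    rw [Real.norm_eq_abs] at hmv
    have hstep : (χ + c ^ 2) * A / (2 * (α + 1) * t₀) * (1 - t) ≤ (1 - m) * A := by
      rw [div_mul_eq_mul_div, div_le_iff₀ (by positivity)]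
      have a1 : (χ + c ^ 2) * (1 - t) ≤ (α + 3/2) * χ * (1 - t₀) := by
        apply mul_le_mul (by linarith) (by linarith [ht.1]) (by linarith [ht.2])
        exact mul_nonneg (by linarith) hχ.le
      nlinarith [mul_le_mul_of_nonneg_right (a1.trans hm) hA]
    have htri : A - |φ t| ≤ |φ 1 - φ t| := abs_sub_abs_le_abs_sub _ _
    linarith
  -- It remains to choose `t₀` and `m`, with `1 - t₀² = μ / χ` and `m² μ^(α + 1) ≥ 1/9`.
  have hfin : ∀ t₀ m μ : ℝ, 0 < t₀ → t₀ < 1 → 0 ≤ m → 0 < μ → 1 - t₀ ^ 2 = μ / χ →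
      1/9 ≤ m ^ 2 * μ ^ (α + 1) →
      (α + 3/2) * χ * (1 - t₀) ≤ (1 - m) * (2 * (α + 1) * t₀) →
      A ≤ 3 * Real.sqrt (α + 1) * χ ^ ((α + 1) / 2) := by
    intro t₀ m μ h0 h1 hm hμ hs hmμ hD
    have h := sq_mul_rpow_le hα1 h0 h1 hm hA hsq (hlow t₀ m h0 h1 hD) hnorm
    rw [hs, Real.div_rpow hμ.le hχ.le] at h
    have hX : 0 < χ ^ (α + 1) := Real.rpow_pos_of_pos hχ _
    have h' : m ^ 2 * μ ^ (α + 1) * A ^ 2 ≤ (α + 1) * χ ^ (α + 1) := by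
      rw [← div_le_iff₀ hX]
      refine le_trans (le_of_eq ?_) h
      ring
    have hX2 : (χ ^ ((α + 1) / 2)) ^ 2 = χ ^ (α + 1) := by
      rw [← Real.rpow_natCast, ← Real.rpow_mul hχ.le]
      norm_num
    refine (pow_le_pow_iff_left₀ hA (by positivity) two_ne_zero).1 ?_
    rw [mul_pow, mul_pow, Real.sq_sqrt hα1.le, hX2]
    nlinarith [mul_le_mul_of_nonneg_right hmμ (sq_nonneg A)]
  -- The relative variation of `φ` on `[t₀, 1]` is controlled through
  -- `1 - t₀ = (μ / χ) / (1 + t₀)`.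
  have hone : ∀ t₀ μ : ℝ, 0 < t₀ → 1 - t₀ ^ 2 = μ / χ → χ * (1 - t₀) * (1 + t₀) = μ := by
    intro t₀ μ _ hs
    have : χ * (1 - t₀ ^ 2) = μ := by rw [hs]; field_simp
    linarith
  rw [div_le_iff₀ (by linarith)] at hχ6
  rcases le_or_gt α 0 with h | h
  · have hχ' : 6/5 ≤ χ := by nlinarith
    have hb : 1/2/χ ≤ 5/12 := by rw [div_le_iff₀ hχ]; linarith
    have hb0 : 0 < 1/2/χ := by positivity
    have ht2 : Real.sqrt (1 - 1/2/χ) ^ 2 = 1 - 1/2/χ := Real.sq_sqrt (by linarith)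
    set t₀ := Real.sqrt (1 - 1/2/χ)
    have h0 : 3/4 ≤ t₀ := Real.le_sqrt_of_sq_le (by norm_num; linarith)
    have h1 : t₀ < 1 := by nlinarith
    have hs : 1 - t₀ ^ 2 = 1/2/χ := by linarith
    have ho := hone t₀ (1/2) (by linarith) hs
    refine hfin t₀ (1/2) (1/2) (by linarith) h1 (by norm_num) (by norm_num) hs ?_ ?_
    · have : (1/2:ℝ) ^ (1:ℝ) ≤ (1/2) ^ (α + 1) :=
        Real.rpow_le_rpow_of_exponent_ge (by norm_num) (by norm_num) (by linarith)
      rw [Real.rpow_one] at this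
      linarith
    · have k : χ * (1 - t₀) ≤ 2/7 := by
        have : 0 ≤ χ * (1 - t₀) := mul_nonneg hχ.le (by linarith)
        nlinarith
      nlinarith
  · have hχ' : 2 ≤ χ := by nlinarith
    have hb : 1/χ ≤ 1/2 := by rw [div_le_iff₀ hχ]; linarith
    have hb0 : 0 < 1/χ := by positivity
    have ht2 : Real.sqrt (1 - 1/χ) ^ 2 = 1 - 1/χ := Real.sq_sqrt (by linarith)
    set t₀ := Real.sqrt (1 - 1/χ)
    have h49 : (7/10:ℝ) ^ 2 ≤ 1/2 := by norm_num
    have h0 : 7/10 ≤ t₀ := Real.le_sqrt_of_sq_le (by linarith)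
    have h1 : t₀ < 1 := by nlinarith
    have hs : 1 - t₀ ^ 2 = 1/χ := by linarith
    have ho := hone t₀ 1 (by linarith) hs
    refine hfin t₀ (1/3) 1 (by linarith) h1 (by norm_num) (by norm_num) hs ?_ ?_
    · rw [Real.one_rpow]; norm_num
    · have k : χ * (1 - t₀) ≤ 10/17 := by
        have : 0 ≤ χ * (1 - t₀) := mul_nonneg hχ.le (by linarith)
        nlinarith
      nlinarith
end

section
/- Let α > -1 be a real number and k ≥ 0 an integer with k + α + 1 > 1/4. Then B(k+α+1, k+α+1) ≤ √2 · π / ( √(2k + 2α + 3/2) · 2^{2k+2α+1} ), where B(x,y) = Γ(x)Γ(y)/Γ(x+y) is the Beta function and Γ is the Gamma function. -/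
/-!
With `s = k + α + 1`, Legendre's duplication formula turns `Γ(s)² / Γ(2s)` into
`√π · 2 ^ (1 - 2s) · Γ(s) / Γ(s + 1/2)`, so the claim becomes
`Γ(s) √(2s - 1/2) ≤ √2 √π Γ(s + 1/2)`. Log-convexity of `Γ` at the midpoint `s + 1` of
`s + 1/2` and `s + 3/2` gives `s² Γ(s)² ≤ (s + 1/2) Γ(s + 1/2)²`, which suffices because
`(2s - 1/2)(s + 1/2) ≤ 2 π s²` for every real `s` (already with `3` in place of `π`).
-/

open MeasureTheory

lemma sq_mul_Gamma_sq_le {s : ℝ} (hs : 0 < s) :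
    s ^ 2 * Real.Gamma s ^ 2 ≤ (s + 1 / 2) * Real.Gamma (s + 1 / 2) ^ 2 := by
  have hH : 0 < Real.Gamma (s + 1 / 2) := Real.Gamma_pos_of_pos (by positivity)
  have hK : 0 < Real.Gamma (s + 3 / 2) := Real.Gamma_pos_of_pos (by positivity)
  have hlc := Real.Gamma_mul_add_mul_le_rpow_Gamma_mul_rpow_Gamma
    (s := s + 1 / 2) (t := s + 3 / 2) (a := 1 / 2) (b := 1 / 2)
    (by positivity) (by positivity) (by norm_num) (by norm_num) (by norm_num)
  rw [show 1 / 2 * (s + 1 / 2) + 1 / 2 * (s + 3 / 2) = s + 1 by ring,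
    Real.Gamma_add_one hs.ne', ← Real.sqrt_eq_rpow, ← Real.sqrt_eq_rpow,
    ← Real.sqrt_mul hH.le] at hlc
  have hrec : Real.Gamma (s + 3 / 2) = (s + 1 / 2) * Real.Gamma (s + 1 / 2) := by
    rw [← Real.Gamma_add_one (by positivity)]
    congr 1
    ring
  have hG : 0 < Real.Gamma s := Real.Gamma_pos_of_pos hs
  have hsq := pow_le_pow_left₀ (by positivity) hlc 2
  rw [Real.sq_sqrt (by positivity), hrec] at hsq
  linarith

lemma Gamma_mul_sqrt_le {s : ℝ} (hs : 1 / 4 < s) :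
    Real.Gamma s * √(2 * s - 1 / 2) ≤ √2 * √Real.pi * Real.Gamma (s + 1 / 2) := by
  have hs0 : 0 < s := by linarith
  have hH : 0 < Real.Gamma (s + 1 / 2) := Real.Gamma_pos_of_pos (by positivity)
  refine (pow_le_pow_iff_left₀ (by positivity) (by positivity) two_ne_zero).mp ?_
  rw [mul_pow, mul_pow, mul_pow, Real.sq_sqrt (by linarith), Real.sq_sqrt (by norm_num),
    Real.sq_sqrt Real.pi_pos.le]
  have hquad : (2 * s - 1 / 2) * (s + 1 / 2) ≤ 2 * Real.pi * s ^ 2 := by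
    nlinarith [mul_le_mul_of_nonneg_right Real.pi_gt_three.le (sq_nonneg s), sq_nonneg (s - 1 / 8)]
  refine le_of_mul_le_mul_left ?_ (pow_pos hs0 2)
  calc s ^ 2 * (Real.Gamma s ^ 2 * (2 * s - 1 / 2))
      = (2 * s - 1 / 2) * (s ^ 2 * Real.Gamma s ^ 2) := by ring
    _ ≤ (2 * s - 1 / 2) * ((s + 1 / 2) * Real.Gamma (s + 1 / 2) ^ 2) :=
        mul_le_mul_of_nonneg_left (sq_mul_Gamma_sq_le hs0) (by linarith)
    _ = (2 * s - 1 / 2) * (s + 1 / 2) * Real.Gamma (s + 1 / 2) ^ 2 := by ring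
    _ ≤ 2 * Real.pi * s ^ 2 * Real.Gamma (s + 1 / 2) ^ 2 := by gcongr
    _ = s ^ 2 * (2 * Real.pi * Real.Gamma (s + 1 / 2) ^ 2) := by ring

/-- upper bound for the Beta function `B(k+α+1, k+α+1)`. -/
theorem stmt14 (α : ℝ) (hα : -1 < α) (k : ℕ) (h : 1/4 < (k : ℝ) + α + 1) :
    Real.Gamma ((k : ℝ) + α + 1) * Real.Gamma ((k : ℝ) + α + 1) /
        Real.Gamma (2 * (k : ℝ) + 2 * α + 2) ≤
      Real.sqrt 2 * Real.pi /
        (Real.sqrt (2 * (k : ℝ) + 2 * α + 3/2) *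
          (2 : ℝ) ^ (2 * (k : ℝ) + 2 * α + 1)) := by
  obtain ⟨s, hs⟩ : ∃ s : ℝ, s = (k : ℝ) + α + 1 := ⟨_, rfl⟩
  rw [show 2 * (k : ℝ) + 2 * α + 2 = 2 * s by rw [hs]; ring,
    show 2 * (k : ℝ) + 2 * α + 3/2 = 2 * s - 1 / 2 by rw [hs]; ring,
    show 2 * (k : ℝ) + 2 * α + 1 = 2 * s - 1 by rw [hs]; ring, ← hs]
  rw [← hs] at h
  have hs0 : 0 < s := by linarith
  have hG : 0 < Real.Gamma s := Real.Gamma_pos_of_pos hs0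
  have hT : 0 < Real.Gamma (2 * s) := Real.Gamma_pos_of_pos (by positivity)
  have hR : 0 < √(2 * s - 1 / 2) := Real.sqrt_pos.mpr (by linarith)
  have hP : 0 < (2 : ℝ) ^ (2 * s - 1) := by positivity
  have hdup := Real.Gamma_mul_Gamma_add_half s
  rw [show 1 - 2 * s = -(2 * s - 1) by ring, Real.rpow_neg (by norm_num)] at hdup
  have hdup' : Real.Gamma s * Real.Gamma (s + 1 / 2) * (2 : ℝ) ^ (2 * s - 1) =
      Real.Gamma (2 * s) * √Real.pi := by
    rw [hdup]
    field_simp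
  rw [div_le_div_iff₀ hT (by positivity)]
  calc Real.Gamma s * Real.Gamma s * (√(2 * s - 1 / 2) * (2 : ℝ) ^ (2 * s - 1))
      = Real.Gamma s * (2 : ℝ) ^ (2 * s - 1) * (Real.Gamma s * √(2 * s - 1 / 2)) := by ring
    _ ≤ Real.Gamma s * (2 : ℝ) ^ (2 * s - 1) *
          (√2 * √Real.pi * Real.Gamma (s + 1 / 2)) :=
        mul_le_mul_of_nonneg_left (Gamma_mul_sqrt_le h) (by positivity)
    _ = √2 * √Real.pi *
          (Real.Gamma s * Real.Gamma (s + 1 / 2) * (2 : ℝ) ^ (2 * s - 1)) := by ring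
    _ = √2 * (√Real.pi * √Real.pi) * Real.Gamma (2 * s) := by rw [hdup']; ring
    _ = √2 * Real.pi * Real.Gamma (2 * s) := by rw [Real.mul_self_sqrt Real.pi_pos.le]
end

section
/- Let φ ∈ L²(I,ω_α) be not almost everywhere zero, and let ν ∈ ℝ satisfy (L_c^α φ)(x) = ν φ(x) for almost every x ∈ I. Then ν > 0. -/
open MeasureTheory

/-!
Put `ψ = φ ω_α`, an integrable function on `(-1, 1]`, and `mₙ = ∫ xⁿ ψ(x) dx`. Expanding the
exponential kernel in its power series and integrating term by term twice gives
`ν ∫ φ² ω_α = ⟨φ, L_c^α φ⟩ = ∑ₙ (cⁿ / n!) mₙ²`. If `ν ≤ 0`, the left side is nonpositive, so every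
moment `mₙ` vanishes. By the Weierstrass approximation theorem `ψ` is then orthogonal to all
continuous functions, hence `ψ = 0` a.e., and `φ = 0` a.e. because the weight is positive inside
the interval. The two ingredients are `hasSum_moment` (termwise integration) and
`ae_zero_of_moments` (determinacy of moments on a bounded interval).
-/

lemma w_pos {α x : ℝ} (h1 : -1 < x) (h2 : x < 1) : 0 < w α x :=
  Real.rpow_pos_of_pos (by nlinarith) _

lemma ae_Ioo : ∀ᵐ x ∂(volume.restrict (Set.Ioc (-1:ℝ) 1)), -1 < x ∧ x < 1 := by
  rw [← restrict_Ioo_eq_restrict_Ioc]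
  exact ae_restrict_mem measurableSet_Ioo

/-- The only singularities of the weight are at the endpoints, where `α > -1` makes them
integrable; by evenness it is enough to treat `[0, 1]`. -/
lemma integrable_w {α : ℝ} (hα : -1 < α) :
    IntervalIntegrable (w α) volume (-1) 1 := by
  have h01 : IntervalIntegrable (w α) volume 0 1 := by
    have h1 : IntervalIntegrable (fun x : ℝ => (1 - x) ^ α) volume 0 1 := by
      have := ((intervalIntegral.intervalIntegrable_rpow' hα (a := 0) (b := 1)).comp_sub_left 1)
      simpa using this.symm
    have h2 : ContinuousOn (fun x : ℝ => (1 + x) ^ α) (Set.uIcc 0 1) := by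
      apply ContinuousOn.rpow_const (by fun_prop)
      intro x hx
      rw [Set.uIcc_of_le zero_le_one] at hx
      left
      linarith [hx.1]
    refine (h1.mul_continuousOn h2).congr ?_
    intro x hx
    rw [Set.uIoc_of_le zero_le_one] at hx
    simp only [w]
    rw [← Real.mul_rpow (by linarith [hx.2]) (by linarith [hx.1])]
    congr 1
    ring
  have h10 : IntervalIntegrable (w α) volume (-1) 0 := by
    have h := (IntervalIntegrable.comp_sub_left h01 0).symm
    simp only [w, zero_sub, neg_sq, sub_zero, sub_self] at h
    exact h
  exact h10.trans h01

/-- Termwise integration of a power series with absolutely summable coefficients against an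
integrable function on `(-1, 1]`. -/
lemma hasSum_moment {ψ : ℝ → ℝ} (hψ : Integrable ψ (volume.restrict (Set.Ioc (-1:ℝ) 1)))
    {a : ℕ → ℝ} (ha : Summable fun n => |a n|) {g : ℝ → ℝ}
    (hg : ∀ᵐ x ∂(volume.restrict (Set.Ioc (-1:ℝ) 1)), HasSum (fun n => a n * x ^ n) (g x)) :
    HasSum (fun n => a n * ∫ x in Set.Ioc (-1:ℝ) 1, x ^ n * ψ x)
      (∫ x in Set.Ioc (-1:ℝ) 1, g x * ψ x) := by
  simp_rw [← integral_const_mul]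
  refine hasSum_integral_of_dominated_convergence (fun n x => |a n| * |ψ x|) ?_ ?_ ?_ ?_ ?_
  · intro n
    have := hψ.1
    fun_prop
  · intro n
    filter_upwards [ae_Ioo] with x hx
    rw [Real.norm_eq_abs, abs_mul, abs_mul, abs_pow]
    have : |x| ^ n ≤ 1 := pow_le_one₀ (abs_nonneg _) (abs_le.2 ⟨hx.1.le, hx.2.le⟩)
    have := mul_le_mul_of_nonneg_right this (abs_nonneg (ψ x))
    rw [one_mul] at this
    exact mul_le_mul_of_nonneg_left this (abs_nonneg _)
  · exact Filter.Eventually.of_forall fun x => ha.mul_right _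
  · simp_rw [tsum_mul_right]
    exact hψ.abs.const_mul _
  · filter_upwards [hg] with x hx
    simpa only [mul_assoc] using hx.mul_right (ψ x)

lemma integrable_mul_of_bound {ψ : ℝ → ℝ}
    (hψ : Integrable ψ (volume.restrict (Set.Ioc (-1:ℝ) 1)))
    {g : ℝ → ℝ} (hg : Continuous g) :
    Integrable (fun x => g x * ψ x) (volume.restrict (Set.Ioc (-1:ℝ) 1)) := by
  obtain ⟨C, hC⟩ := (isCompact_Icc (a := (-1:ℝ)) (b := 1)).exists_bound_of_continuousOn
    hg.continuousOn
  refine hψ.bdd_mul (c := C) hg.aestronglyMeasurable ?_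
  filter_upwards [ae_Ioo] with x hx
  exact hC x ⟨hx.1.le, hx.2.le⟩

/-- An integrable function on a bounded interval is determined by its moments. -/
lemma ae_zero_of_moments {ψ : ℝ → ℝ}
    (hψ : Integrable ψ (volume.restrict (Set.Ioc (-1:ℝ) 1)))
    (hm : ∀ n : ℕ, ∫ x in Set.Ioc (-1:ℝ) 1, x ^ n * ψ x = 0) :
    ∀ᵐ x ∂(volume.restrict (Set.Ioc (-1:ℝ) 1)), ψ x = 0 := by
  have hpoly : ∀ p : Polynomial ℝ, ∫ x in Set.Ioc (-1:ℝ) 1, p.eval x * ψ x = 0 := by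
    intro p
    simp_rw [Polynomial.eval_eq_sum_range, Finset.sum_mul]
    rw [integral_finsetSum]
    · refine Finset.sum_eq_zero fun n _ => ?_
      simp_rw [mul_assoc]
      rw [integral_const_mul, hm, mul_zero]
    · intro n _
      exact integrable_mul_of_bound hψ (by fun_prop)
  refine ae_eq_zero_of_integral_contDiff_smul_eq_zero hψ.locallyIntegrable ?_
  intro g hg _
  simp only [smul_eq_mul]
  have hgc := hg.continuous
  have key : ∀ ε > 0, |∫ x in Set.Ioc (-1:ℝ) 1, g x * ψ x|
      ≤ ε * ∫ x in Set.Ioc (-1:ℝ) 1, |ψ x| := by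
    intro ε hε
    obtain ⟨p, hp⟩ := exists_polynomial_near_of_continuousOn (-1) 1 g hgc.continuousOn ε hε
    have h1 : ∫ x in Set.Ioc (-1:ℝ) 1, g x * ψ x
        = ∫ x in Set.Ioc (-1:ℝ) 1, (g x - p.eval x) * ψ x := by
      simp_rw [sub_mul]
      rw [integral_sub (integrable_mul_of_bound hψ hgc)
        (integrable_mul_of_bound hψ (by fun_prop)), hpoly, sub_zero]
    rw [h1, ← integral_const_mul, ← Real.norm_eq_abs]
    refine norm_integral_le_of_norm_le (hψ.abs.const_mul _) ?_
    filter_upwards [ae_Ioo] with x hx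
    rw [Real.norm_eq_abs, abs_mul, abs_sub_comm]
    exact mul_le_mul_of_nonneg_right (hp x ⟨hx.1.le, hx.2.le⟩).le (abs_nonneg _)
  set M := ∫ x in Set.Ioc (-1:ℝ) 1, |ψ x|
  have hM : 0 ≤ M := integral_nonneg fun _ => abs_nonneg _
  by_contra hne
  have hpos := abs_pos.2 hne
  set T := |∫ x in Set.Ioc (-1:ℝ) 1, g x * ψ x|
  have hk := key (T / (M + 1)) (by positivity)
  rw [div_mul_eq_mul_div, le_div_iff₀ (by positivity)] at hk
  nlinarith

/-- every eigenvalue of `L_c^α` (with nontrivial eigenfunction)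
is positive. -/
theorem stmt16 (c α ν : ℝ) (hc : 0 < c) (hα : -1 < α)
    (φ : ℝ → ℝ) (hφ : MemL2 α φ)
    (hnz : ¬ (∀ᵐ x ∂(volume.restrict (Set.Icc (-1:ℝ) 1)), φ x = 0))
    (heig : ∀ᵐ x ∂(volume.restrict (Set.Icc (-1:ℝ) 1)), Lap c α φ x = ν * φ x) :
    0 < ν := by
  rw [← restrict_Ioc_eq_restrict_Icc] at hnz heig
  obtain ⟨hmeas, hint⟩ := hφ
  have hle : (-1:ℝ) ≤ 1 := by norm_num
  have hw := integrable_w hα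
  rw [intervalIntegrable_iff_integrableOn_Ioc_of_le hle] at hint hw
  have hψ : Integrable (fun x => φ x * w α x) (volume.restrict (Set.Ioc (-1:ℝ) 1)) := by
    refine Integrable.mono' (hint.add hw) (hmeas.mul (measurable_w α)).aestronglyMeasurable ?_
    filter_upwards [ae_Ioo] with x hx
    have hp := w_pos (α := α) hx.1 hx.2
    rw [Real.norm_eq_abs, abs_mul, abs_of_pos hp]
    simp only [Pi.add_apply]
    -- `|t| ≤ t² + 1`
    have : |φ x| ≤ φ x ^ 2 + 1 := by
      rw [← sq_abs]
      nlinarith [sq_nonneg (|φ x| - 1), abs_nonneg (φ x)]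
    nlinarith
  set ψ := fun x => φ x * w α x with hψdef
  set m : ℕ → ℝ := fun n => ∫ x in Set.Ioc (-1:ℝ) 1, x ^ n * ψ x with hmdef
  set M := ∫ x in Set.Ioc (-1:ℝ) 1, |ψ x|
  have hmM : ∀ n, |m n| ≤ M := by
    intro n
    rw [← Real.norm_eq_abs]
    refine norm_integral_le_of_norm_le hψ.abs ?_
    filter_upwards [ae_Ioo] with x hx
    rw [Real.norm_eq_abs, abs_mul, abs_pow]
    exact mul_le_of_le_one_left (abs_nonneg _)
      (pow_le_one₀ (abs_nonneg _) (abs_le.2 ⟨hx.1.le, hx.2.le⟩))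
  have hLap : ∀ x, HasSum (fun n : ℕ => (c * x) ^ n / (n.factorial : ℝ) * m n) (Lap c α φ x) := by
    intro x
    have h := hasSum_moment hψ (a := fun n : ℕ => (c * x) ^ n / (n.factorial : ℝ))
      (g := fun y => Real.exp (c * x * y))
      (Real.summable_pow_div_factorial (c * x)).abs
      (Filter.Eventually.of_forall fun y => by
        have := NormedSpace.expSeries_div_hasSum_exp (c * x * y)
        rw [← Real.exp_eq_exp_ℝ] at this
        refine this.congr_fun ?_
        intro n
        rw [mul_pow (c * x) y]
        ring)
    unfold Lap
    rw [intervalIntegral.integral_of_le hle]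
    simpa only [hψdef, mul_assoc] using h
  have hquad : HasSum (fun n : ℕ => c ^ n / (n.factorial : ℝ) * m n * m n)
      (∫ x in Set.Ioc (-1:ℝ) 1, Lap c α φ x * ψ x) := by
    refine hasSum_moment hψ ?_ (Filter.Eventually.of_forall fun x => ?_)
    · refine Summable.of_nonneg_of_le (fun _ => abs_nonneg _) (fun n => ?_)
        ((Real.summable_pow_div_factorial c).mul_right M)
      rw [abs_mul, abs_of_nonneg (by positivity)]
      exact mul_le_mul_of_nonneg_left (hmM n) (by positivity)
    · refine (hLap x).congr_fun fun n => ?_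
      rw [mul_pow]
      ring
  have hval : ∫ x in Set.Ioc (-1:ℝ) 1, Lap c α φ x * ψ x
      = ν * ∫ x in Set.Ioc (-1:ℝ) 1, φ x ^ 2 * w α x := by
    rw [← integral_const_mul]
    refine integral_congr_ae ?_
    filter_upwards [heig] with x hx
    rw [hx]
    simp only [hψdef]
    ring
  by_contra hν
  push Not at hν
  have hN : 0 ≤ ∫ x in Set.Ioc (-1:ℝ) 1, φ x ^ 2 * w α x := by
    refine integral_nonneg_of_ae ?_
    filter_upwards [ae_Ioo] with x hx
    exact mul_nonneg (sq_nonneg _) (w_pos hx.1 hx.2).le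
  rw [hval] at hquad
  have hnn : ∀ n : ℕ, 0 ≤ c ^ n / (n.factorial : ℝ) * m n * m n := fun n => by
    rw [mul_assoc]
    exact mul_nonneg (by positivity) (mul_self_nonneg _)
  have hm0 : ∀ n, m n = 0 := by
    intro n
    have h1 := (le_hasSum hquad n fun j _ => hnn j).trans (mul_nonpos_of_nonpos_of_nonneg hν hN)
    have h2 := le_antisymm h1 (hnn n)
    have h3 : c ^ n / (n.factorial : ℝ) ≠ 0 := by positivity
    simpa [h3, mul_assoc] using h2
  apply hnz
  filter_upwards [ae_zero_of_moments hψ hm0, ae_Ioo] with x hx hx'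
  exact (mul_eq_zero.1 hx).resolve_right (w_pos hx'.1 hx'.2).ne'
end
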